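/- arXiv:2103.11493 — 3 statements merged into one kernel-verified Lean document; each statement's English description precedes it below -/
import Mathlib

section
/- Let d be a positive integer, let x_1, …, x_m ∈ [−1,1]^d be design points (with coordinates x_{ij}, j = 1,…,d), let n_1, …, n_m be positive integers with n = n_1 + ⋯ + n_m, let F_ξ = (1/n) Σ_{i=1}^m n_i δ_{x_i}, and let F_unif be the probability measure on [−1,1]^d with density 1/2^d with respect to Lebesgue measure. Then ∫∫ K_d(x,t) d(F_unif−F_ξ)(x) d(F_unif−F_ξ)(t) = (7/6)^d − (1/(2^{d−1} n)) Σ_{i=1}^m n_i ∏_{j=1}^d (2 + |x_{ij}| − x_{ij}²/2) + (1/n²) Σ_{i=1}^m Σ_{k=1}^m n_i n_k ∏_{j=1}^d (1 + (|x_{ij}| + |x_{kj}| − |x_{ij} − x_{kj}|)/2), where K_d(x,t) = ∏_{j=1}^d (1 + (|x_j| + |t_j| − |x_j − t_j|)/2). -/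
open MeasureTheory
open scoped ENNReal

/-- The integral over `[-1,1]` of the distance to a point of `[-1,1]`. -/
lemma integral_abs_sub_of_mem_Icc {a : ℝ} (ha : a ∈ Set.Icc (-1 : ℝ) 1) :
    ∫ t in (-1 : ℝ)..1, |a - t| = 1 + a ^ 2 := by
  have hc : Continuous fun t : ℝ => |a - t| := by fun_prop
  rw [← intervalIntegral.integral_add_adjacent_intervals
    (hc.intervalIntegrable (-1) a) (hc.intervalIntegrable a 1)]
  have h₁ : ∫ t in (-1 : ℝ)..a, |a - t| = ∫ t in (-1 : ℝ)..a, (a - t) := by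
    refine intervalIntegral.integral_congr fun t ht => ?_
    rw [Set.uIcc_of_le ha.1] at ht
    exact abs_of_nonneg (sub_nonneg.2 ht.2)
  have h₂ : ∫ t in a..1, |a - t| = ∫ t in a..1, (t - a) := by
    refine intervalIntegral.integral_congr fun t ht => ?_
    rw [Set.uIcc_of_le ha.2] at ht
    simpa using abs_of_nonpos (sub_nonpos.2 ht.1)
  rw [h₁, h₂, intervalIntegral.integral_sub (by simp) (by simp),
    intervalIntegral.integral_sub (by simp) (by simp)]
  simp only [intervalIntegral.integral_const, integral_id, smul_eq_mul]
  ring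

lemma integral_abs_neg_one_one : ∫ t in (-1 : ℝ)..1, |t| = 1 := by
  simpa using integral_abs_sub_of_mem_Icc (a := 0) (by norm_num)

lemma integral_kernel_factor {a : ℝ} (ha : a ∈ Set.Icc (-1 : ℝ) 1) :
    ∫ t in (-1 : ℝ)..1, (1 + (|a| + |t| - |a - t|) / 2) = 2 + |a| - a ^ 2 / 2 := by
  have h₁ : Continuous fun t : ℝ => |a - t| := by fun_prop
  have h₂ : Continuous fun t : ℝ => |t| := by fun_prop
  have h₃ : Continuous fun t : ℝ => |a| + |t| := by fun_prop
  have h₄ : Continuous fun t : ℝ => (|a| + |t| - |a - t|) / 2 := by fun_prop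
  rw [intervalIntegral.integral_add (by simp) (h₄.intervalIntegrable _ _),
    intervalIntegral.integral_div,
    intervalIntegral.integral_sub (h₃.intervalIntegrable _ _) (h₁.intervalIntegrable _ _),
    intervalIntegral.integral_add (by simp) (h₂.intervalIntegrable _ _),
    integral_abs_sub_of_mem_Icc ha, integral_abs_neg_one_one]
  simp only [intervalIntegral.integral_const, smul_eq_mul]
  ring

lemma integral_kernel_factor_mean :
    ∫ a in (-1 : ℝ)..1, (2 + |a| - a ^ 2 / 2) / 2 = 7 / 3 := by
  have h₁ : Continuous fun a : ℝ => |a| := by fun_prop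
  have h₂ : Continuous fun a : ℝ => 2 + |a| := by fun_prop
  have h₃ : Continuous fun a : ℝ => a ^ 2 / 2 := by fun_prop
  rw [intervalIntegral.integral_div,
    intervalIntegral.integral_sub (h₂.intervalIntegrable _ _) (h₃.intervalIntegrable _ _),
    intervalIntegral.integral_add (by simp) (h₁.intervalIntegrable _ _),
    integral_abs_neg_one_one, intervalIntegral.integral_div, integral_pow]
  simp only [intervalIntegral.integral_const, smul_eq_mul]
  norm_num

/-- The uniform probability measure on `[-1,1]^d`. -/
noncomputable def uniformCube (d : ℕ) : Measure (Fin d → ℝ) :=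
  ((2 : ℝ≥0∞) ^ d)⁻¹ • volume.restrict (Set.univ.pi fun _ : Fin d => Set.Icc (-1 : ℝ) 1)

lemma integral_uniformCube_prod {d : ℕ} (f : Fin d → ℝ → ℝ) :
    ∫ t, ∏ j, f j (t j) ∂uniformCube d = ∏ j, (∫ s in (-1 : ℝ)..1, f j s) / 2 := by
  rw [uniformCube, integral_smul_measure, volume_pi, Measure.restrict_pi_pi,
    integral_fintype_prod_eq_prod, Finset.prod_div_distrib]
  simp only [intervalIntegral.integral_of_le (show (-1 : ℝ) ≤ 1 by norm_num),
    integral_Icc_eq_integral_Ioc]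
  simp [div_eq_inv_mul]

lemma ae_mem_uniformCube (d : ℕ) :
    ∀ᵐ a ∂uniformCube d, a ∈ Set.univ.pi fun _ : Fin d => Set.Icc (-1 : ℝ) 1 :=
  Measure.ae_smul_measure
    (ae_restrict_mem (MeasurableSet.univ_pi fun _ => measurableSet_Icc)) _

lemma Continuous.integrable_uniformCube {d : ℕ} {f : (Fin d → ℝ) → ℝ} (hf : Continuous f) :
    Integrable f (uniformCube d) :=
  Integrable.smul_measure
    (hf.continuousOn.integrableOn_compact (isCompact_univ_pi fun _ => isCompact_Icc))
    (by simp)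

/-- Integration against the empirical measure of a design. -/
lemma integral_empirical {α : Type*} [MeasurableSpace α] [MeasurableSingletonClass α]
    {m : ℕ} (x : Fin m → α) (c : Fin m → ℕ) (n : ℕ) (f : α → ℝ) :
    ∫ a, f a ∂((n : ℝ≥0∞)⁻¹ • ∑ i, (c i : ℝ≥0∞) • Measure.dirac (x i))
      = (n : ℝ)⁻¹ * ∑ i, (c i : ℝ) * f (x i) := by
  rw [integral_smul_measure, integral_finsetSum_measure fun i _ =>
    (integrable_dirac (by simp)).smul_measure (by simp)]
  simp [integral_smul_measure]

lemma integral_kernel_uniformCube {d : ℕ} {a : Fin d → ℝ}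
    (ha : a ∈ Set.univ.pi fun _ : Fin d => Set.Icc (-1 : ℝ) 1) :
    ∫ t, ∏ j, (1 + (|a j| + |t j| - |a j - t j|) / 2) ∂uniformCube d
      = ∏ j, (2 + |a j| - a j ^ 2 / 2) / 2 := by
  rw [integral_uniformCube_prod fun j s => 1 + (|a j| + |s| - |a j - s|) / 2]
  exact Finset.prod_congr rfl fun j _ => by
    rw [integral_kernel_factor (ha j (Set.mem_univ j))]

lemma integral_integral_kernel_uniformCube (d : ℕ) :
    ∫ a, ∫ t, ∏ j, (1 + (|a j| + |t j| - |a j - t j|) / 2) ∂uniformCube d ∂uniformCube d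
      = (7 / 6 : ℝ) ^ d := by
  rw [integral_congr_ae ((ae_mem_uniformCube d).mono fun a ha => integral_kernel_uniformCube ha),
    integral_uniformCube_prod fun _ s => (2 + |s| - s ^ 2 / 2) / 2,
    integral_kernel_factor_mean, Finset.prod_const, Finset.card_univ, Fintype.card_fin]
  norm_num only

/-- closed form for the squared uniform discrepancy
`D²(ξ; F_unif)` on `[-1,1]^d` under the kernel
`K_d(x,t) = ∏_j (1 + (|x_j|+|t_j|-|x_j-t_j|)/2)`, where the squared discrepancy
`∫∫ K_d d(F_unif − F_ξ) d(F_unif − F_ξ)` is written out bilinearly. -/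
theorem uniform_discrepancy_sq_closed_form
    (d : ℕ) (hd : 0 < d)
    (m : ℕ) (x : Fin m → Fin d → ℝ)
    (hx : ∀ i, x i ∈ Set.univ.pi fun _ : Fin d => Set.Icc (-1 : ℝ) 1)
    (nn : Fin m → ℕ) (hnn : ∀ i, 0 < nn i)
    (n : ℕ) (hn : n = ∑ i, nn i)
    (K : (Fin d → ℝ) → (Fin d → ℝ) → ℝ)
    (hK : K = fun a t => ∏ j, (1 + (|a j| + |t j| - |a j - t j|) / 2))
    (μ ν : Measure (Fin d → ℝ))
    (hμ : μ = ((2 : ℝ≥0∞) ^ d)⁻¹ •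
      volume.restrict (Set.univ.pi fun _ : Fin d => Set.Icc (-1 : ℝ) 1))
    (hν : ν = ((n : ℝ≥0∞))⁻¹ • ∑ i, (nn i : ℝ≥0∞) • Measure.dirac (x i)) :
    (∫ a, ∫ t, K a t ∂μ ∂μ) - (∫ a, ∫ t, K a t ∂ν ∂μ) - (∫ a, ∫ t, K a t ∂μ ∂ν)
        + (∫ a, ∫ t, K a t ∂ν ∂ν)
      = (7 / 6 : ℝ) ^ d
        - (1 / (2 ^ (d - 1) * n)) *
            ∑ i, (nn i : ℝ) * ∏ j, (2 + |x i j| - (x i j) ^ 2 / 2)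
        + (1 / (n : ℝ) ^ 2) *
            ∑ i, ∑ k, (nn i : ℝ) * (nn k : ℝ) *
              ∏ j, (1 + (|x i j| + |x k j| - |x i j - x k j|) / 2) := by
  change μ = uniformCube d at hμ
  have hcross : ∫ a, ∫ t, K a t ∂ν ∂μ
      = (n : ℝ)⁻¹ * ∑ i, (nn i : ℝ) * ∏ j, (2 + |x i j| - x i j ^ 2 / 2) / 2 := by
    subst hK hμ hν
    simp only [integral_empirical]
    rw [integral_const_mul, integral_finsetSum _ fun i _ =>
      Continuous.integrable_uniformCube (by fun_prop)]
    congr 1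
    refine Finset.sum_congr rfl fun i _ => ?_
    rw [integral_const_mul, ← integral_kernel_uniformCube (hx i)]
    simp only [abs_sub_comm (x i _), add_comm |x i _|]
  have hcross' : ∫ a, ∫ t, K a t ∂μ ∂ν
      = (n : ℝ)⁻¹ * ∑ i, (nn i : ℝ) * ∏ j, (2 + |x i j| - x i j ^ 2 / 2) / 2 := by
    subst hK hμ hν
    simp only [integral_empirical, integral_kernel_uniformCube (hx _)]
  have hself : ∫ a, ∫ t, K a t ∂ν ∂ν = (1 / (n : ℝ) ^ 2) * ∑ i, ∑ k, (nn i : ℝ) * (nn k : ℝ) *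
      ∏ j, (1 + (|x i j| + |x k j| - |x i j - x k j|) / 2) := by
    subst hK hν
    simp only [integral_empirical, Finset.mul_sum]
    refine Finset.sum_congr rfl fun i _ => Finset.sum_congr rfl fun k _ => ?_
    ring
  have hhalf : ∑ i, (nn i : ℝ) * ∏ j, (2 + |x i j| - x i j ^ 2 / 2) / 2
      = (∑ i, (nn i : ℝ) * ∏ j, (2 + |x i j| - x i j ^ 2 / 2)) / (2 ^ (d - 1) * 2) := by
    simp only [pow_sub_one_mul hd.ne', Finset.prod_div_distrib, Finset.prod_const,
      Finset.card_univ, Fintype.card_fin, mul_div_assoc', Finset.sum_div]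
  rw [hcross, hcross', hself, hhalf, hμ, hK, integral_integral_kernel_uniformCube]
  generalize ∑ i, (nn i : ℝ) * ∏ j, (2 + |x i j| - x i j ^ 2 / 2) = S
  ring
end

section
/- For every x ∈ [−1,1], ∫_{−1}^{1} (1 + (|t| + |x| − |t − x|)/2) · (1/(π√(1−t²))) dt = 1 + 1/π + |x|/2 − (1/π)(x·arcsin(x) + √(1−x²)). -/
open Real

theorem intervalIntegrable_inv_sqrt_one_sub_sq :
    IntervalIntegrable (fun t : ℝ => 1 / √(1 - t ^ 2)) MeasureTheory.volume (-1) 1 := by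
  apply intervalIntegral.intervalIntegrable_deriv_of_nonneg (g := arcsin)
  · exact continuous_arcsin.continuousOn
  · intro t ht
    norm_num at ht
    exact hasDerivAt_arcsin ht.1.ne' ht.2.ne
  · intro t _
    positivity

theorem integral_affine_mul_inv_sqrt_one_sub_sq (p q : ℝ) {a b : ℝ} (ha : -1 ≤ a)
    (hab : a ≤ b) (hb : b ≤ 1) :
    ∫ t in a..b, (p + q * t) * (1 / √(1 - t ^ 2)) =
      p * (arcsin b - arcsin a) - q * (√(1 - b ^ 2) - √(1 - a ^ 2)) := by
  have hsub : Set.uIcc a b ⊆ Set.uIcc (-1 : ℝ) 1 := by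
    rw [Set.uIcc_of_le hab, Set.uIcc_of_le (by norm_num)]
    exact Set.Icc_subset_Icc ha hb
  rw [intervalIntegral.integral_eq_sub_of_hasDerivAt_of_le hab
    (f := fun t => p * arcsin t - q * √(1 - t ^ 2))]
  · ring
  · exact Continuous.continuousOn (by fun_prop)
  · intro t ht
    have h1 : -1 < t := by linarith [ht.1]
    have h2 : t < 1 := by linarith [ht.2]
    have hpos : 0 < 1 - t ^ 2 := by nlinarith
    have hs : HasDerivAt (fun t : ℝ => 1 - t ^ 2) (-(2 * t)) t := by
      simpa using (hasDerivAt_pow 2 t).const_sub 1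
    refine (((hasDerivAt_arcsin h1.ne' h2.ne).const_mul p).sub
      ((hs.sqrt hpos.ne').const_mul q)).congr_deriv ?_
    have := (sqrt_pos.2 hpos).ne'
    field_simp
    ring
  · exact (intervalIntegrable_inv_sqrt_one_sub_sq.mono_set hsub).continuousOn_mul
      (Continuous.continuousOn (by fun_prop))

theorem integral_abs_sub_mul_inv_sqrt_one_sub_sq {c : ℝ} (hc : c ∈ Set.Icc (-1 : ℝ) 1) :
    ∫ t in (-1 : ℝ)..1, |t - c| * (1 / √(1 - t ^ 2)) =
      2 * (c * arcsin c + √(1 - c ^ 2)) := by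
  have hint : IntervalIntegrable (fun t : ℝ => |t - c| * (1 / √(1 - t ^ 2)))
      MeasureTheory.volume (-1) 1 :=
    intervalIntegrable_inv_sqrt_one_sub_sq.continuousOn_mul
      (Continuous.continuousOn (by fun_prop))
  have hmem : c ∈ Set.uIcc (-1 : ℝ) 1 := by rwa [Set.uIcc_of_le (by norm_num)]
  rw [← intervalIntegral.integral_add_adjacent_intervals
    (hint.mono_set (Set.uIcc_subset_uIcc_left hmem))
    (hint.mono_set (Set.uIcc_subset_uIcc_right hmem))]
  have hleft : ∫ t in (-1 : ℝ)..c, |t - c| * (1 / √(1 - t ^ 2)) =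
      ∫ t in (-1 : ℝ)..c, (c + (-1) * t) * (1 / √(1 - t ^ 2)) := by
    refine intervalIntegral.integral_congr fun t ht => ?_
    rw [Set.uIcc_of_le hc.1] at ht
    simp only [abs_of_nonpos (sub_nonpos.2 ht.2)]
    ring
  have hright : ∫ t in c..1, |t - c| * (1 / √(1 - t ^ 2)) =
      ∫ t in c..1, (-c + 1 * t) * (1 / √(1 - t ^ 2)) := by
    refine intervalIntegral.integral_congr fun t ht => ?_
    rw [Set.uIcc_of_le hc.2] at ht
    simp only [abs_of_nonneg (sub_nonneg.2 ht.1)]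
    ring
  rw [hleft, hright, integral_affine_mul_inv_sqrt_one_sub_sq _ _ le_rfl hc.1 hc.2,
    integral_affine_mul_inv_sqrt_one_sub_sq _ _ hc.1 hc.2 le_rfl]
  simp only [arcsin_one, arcsin_neg_one]
  norm_num
  ring

/-- single integral of the kernel `K₁(x,t) = 1 + (|t|+|x|-|t-x|)/2`
against the arcsine distribution on `[-1,1]`. -/
theorem kernel_integral_arcsine_one_dim (x : ℝ) (hx : x ∈ Set.Icc (-1 : ℝ) 1) :
    (∫ t in (-1 : ℝ)..1,
        (1 + (|t| + |x| - |t - x|) / 2) * (1 / (π * Real.sqrt (1 - t ^ 2))))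
      = 1 + 1 / π + |x| / 2 - (1 / π) * (x * Real.arcsin x + Real.sqrt (1 - x ^ 2)) := by
  have hint (c : ℝ) : IntervalIntegrable (fun t : ℝ => |t - c| * (1 / √(1 - t ^ 2)))
      MeasureTheory.volume (-1) 1 :=
    intervalIntegrable_inv_sqrt_one_sub_sq.continuousOn_mul
      (Continuous.continuousOn (by fun_prop))
  have hdecomp (t : ℝ) : (1 + (|t| + |x| - |t - x|) / 2) * (1 / (π * √(1 - t ^ 2))) =
      (1 + |x| / 2) / π * (1 / √(1 - t ^ 2)) + 1 / (2 * π) * (|t - 0| * (1 / √(1 - t ^ 2)))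
        - 1 / (2 * π) * (|t - x| * (1 / √(1 - t ^ 2))) := by
    rw [sub_zero, one_div_mul_eq_div, one_div, mul_inv]
    ring
  have hmass : ∫ t in (-1 : ℝ)..1, 1 / √(1 - t ^ 2) = π := by
    have h := integral_affine_mul_inv_sqrt_one_sub_sq 1 0 le_rfl (by norm_num : (-1 : ℝ) ≤ 1) le_rfl
    simpa using h
  simp only [hdecomp]
  rw [intervalIntegral.integral_sub
      ((intervalIntegrable_inv_sqrt_one_sub_sq.const_mul _).add ((hint 0).const_mul _))
      ((hint x).const_mul _),
    intervalIntegral.integral_add (intervalIntegrable_inv_sqrt_one_sub_sq.const_mul _)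
      ((hint 0).const_mul _)]
  simp only [intervalIntegral.integral_const_mul]
  rw [hmass, integral_abs_sub_mul_inv_sqrt_one_sub_sq hx,
    integral_abs_sub_mul_inv_sqrt_one_sub_sq (by norm_num)]
  have := pi_ne_zero
  simp only [arcsin_zero]
  norm_num
  field_simp
  ring
end

section
/- ∫_{−1}^{1} ∫_{−1}^{1} (1 + (|t| + |x| − |t − x|)/2) · (1/(π√(1−t²))) · (1/(π√(1−x²))) dt dx = 1 + 2/π − 4/π². -/
open Real

open MeasureTheory Set

lemma hasDerivAt_sqrt_one_sub_sq {t : ℝ} (ht : t ∈ Ioo (-1 : ℝ) 1) :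
    HasDerivAt (fun s : ℝ => √(1 - s ^ 2)) (-t * (1 / √(1 - t ^ 2))) t := by
  have hpos : 0 < 1 - t ^ 2 := by nlinarith [ht.1, ht.2]
  refine (((hasDerivAt_pow 2 t).const_sub 1).sqrt hpos.ne').congr_deriv ?_
  have hsqrt := (sqrt_pos.2 hpos).ne'
  push_cast
  field_simp

lemma hasDerivAt_arcsin_of_mem_Ioo {t : ℝ} (ht : t ∈ Ioo (-1 : ℝ) 1) :
    HasDerivAt arcsin (1 / √(1 - t ^ 2)) t :=
  hasDerivAt_arcsin ht.1.ne' ht.2.ne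

lemma intervalIntegrable_one_div_sqrt_one_sub_sq :
    IntervalIntegrable (fun t : ℝ => 1 / √(1 - t ^ 2)) volume (-1) 1 := by
  apply intervalIntegral.intervalIntegrable_deriv_of_nonneg (g := arcsin)
    continuous_arcsin.continuousOn
  · intro t ht
    exact hasDerivAt_arcsin_of_mem_Ioo (by simpa using ht)
  · intro t _
    positivity

lemma intervalIntegrable_mul_one_div_sqrt_one_sub_sq {f : ℝ → ℝ} (hf : Continuous f)
    {a b : ℝ} (ha : a ∈ Icc (-1 : ℝ) 1) (hb : b ∈ Icc (-1 : ℝ) 1) :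
    IntervalIntegrable (fun t : ℝ => f t * (1 / √(1 - t ^ 2))) volume a b :=
  (intervalIntegrable_one_div_sqrt_one_sub_sq.continuousOn_mul hf.continuousOn).mono_set <| by
    rw [uIcc_of_le (by norm_num : (-1 : ℝ) ≤ 1)]
    exact uIcc_subset_Icc ha hb

/-- The fundamental theorem of calculus for integrands with the arcsine weight. -/
lemma integral_mul_one_div_sqrt_one_sub_sq {f F : ℝ → ℝ} (hf : Continuous f)
    (hF : Continuous F) {a b : ℝ} (ha : -1 ≤ a) (hab : a ≤ b) (hb : b ≤ 1)
    (hderiv : ∀ t ∈ Ioo (-1 : ℝ) 1, HasDerivAt F (f t * (1 / √(1 - t ^ 2))) t) :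
    ∫ t in a..b, f t * (1 / √(1 - t ^ 2)) = F b - F a :=
  intervalIntegral.integral_eq_sub_of_hasDerivAt_of_le hab hF.continuousOn
    (fun t ht => hderiv t ⟨ha.trans_lt ht.1, ht.2.trans_le hb⟩)
    (intervalIntegrable_mul_one_div_sqrt_one_sub_sq hf ⟨ha, hab.trans hb⟩ ⟨ha.trans hab, hb⟩)

lemma integral_sub_mul_one_div_sqrt_one_sub_sq (x : ℝ) {a b : ℝ} (ha : -1 ≤ a) (hab : a ≤ b)
    (hb : b ≤ 1) :
    ∫ t in a..b, (t - x) * (1 / √(1 - t ^ 2))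
      = (-√(1 - b ^ 2) - x * arcsin b) - (-√(1 - a ^ 2) - x * arcsin a) := by
  refine integral_mul_one_div_sqrt_one_sub_sq (F := fun t => -√(1 - t ^ 2) - x * arcsin t)
    (by fun_prop) (by fun_prop) ha hab hb fun t ht => ?_
  refine ((hasDerivAt_sqrt_one_sub_sq ht).neg.sub
    ((hasDerivAt_arcsin_of_mem_Ioo ht).const_mul x)).congr_deriv ?_
  ring

lemma integral_abs_sub_mul_one_div_sqrt_one_sub_sq {x : ℝ} (hx : x ∈ Icc (-1 : ℝ) 1) :
    ∫ t in (-1 : ℝ)..1, |t - x| * (1 / √(1 - t ^ 2)) = 2 * (x * arcsin x + √(1 - x ^ 2)) := by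
  have hcont : Continuous fun t : ℝ => |t - x| := by fun_prop
  rw [← intervalIntegral.integral_add_adjacent_intervals
    (intervalIntegrable_mul_one_div_sqrt_one_sub_sq hcont (by simp) hx)
    (intervalIntegrable_mul_one_div_sqrt_one_sub_sq hcont hx (by simp))]
  have hleft : ∫ t in (-1 : ℝ)..x, |t - x| * (1 / √(1 - t ^ 2))
      = -∫ t in (-1 : ℝ)..x, (t - x) * (1 / √(1 - t ^ 2)) := by
    rw [← intervalIntegral.integral_neg]
    refine intervalIntegral.integral_congr fun t ht => ?_
    rw [uIcc_of_le hx.1] at ht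
    simp only [abs_of_nonpos (sub_nonpos.2 ht.2), neg_mul]
  have hright : ∫ t in x..1, |t - x| * (1 / √(1 - t ^ 2))
      = ∫ t in x..1, (t - x) * (1 / √(1 - t ^ 2)) := by
    refine intervalIntegral.integral_congr fun t ht => ?_
    rw [uIcc_of_le hx.2] at ht
    simp only [abs_of_nonneg (sub_nonneg.2 ht.1)]
  rw [hleft, hright, integral_sub_mul_one_div_sqrt_one_sub_sq x le_rfl hx.1 hx.2,
    integral_sub_mul_one_div_sqrt_one_sub_sq x hx.1 hx.2 le_rfl]
  simp
  ring

lemma integral_abs_mul_one_div_sqrt_one_sub_sq :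
    ∫ t in (-1 : ℝ)..1, |t| * (1 / √(1 - t ^ 2)) = 2 := by
  simpa using integral_abs_sub_mul_one_div_sqrt_one_sub_sq (x := 0) (by simp)

lemma integral_one_div_sqrt_one_sub_sq :
    ∫ t in (-1 : ℝ)..1, 1 / √(1 - t ^ 2) = π := by
  have h := integral_mul_one_div_sqrt_one_sub_sq (f := fun _ => 1) continuous_const
    continuous_arcsin le_rfl (by norm_num) le_rfl
    fun t ht => by simpa only [one_mul] using hasDerivAt_arcsin_of_mem_Ioo ht
  simp only [one_mul, arcsin_one, arcsin_neg_one] at h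
  rw [h]
  ring

lemma integral_mul_arcsin_add_sqrt_mul_one_div_sqrt_one_sub_sq :
    ∫ x in (-1 : ℝ)..1, (x * arcsin x + √(1 - x ^ 2)) * (1 / √(1 - x ^ 2)) = 4 := by
  rw [integral_mul_one_div_sqrt_one_sub_sq (F := fun x => 2 * x - √(1 - x ^ 2) * arcsin x)
    (by fun_prop) (by fun_prop) le_rfl (by norm_num) le_rfl]
  · norm_num
  · intro t ht
    have hpos : 0 < √(1 - t ^ 2) := sqrt_pos.2 (by nlinarith [ht.1, ht.2])
    refine (((hasDerivAt_id t).const_mul 2).sub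
      ((hasDerivAt_sqrt_one_sub_sq ht).mul (hasDerivAt_arcsin_of_mem_Ioo ht))).congr_deriv ?_
    field_simp
    ring

lemma integral_kernel_mul_arcsine_density {x : ℝ} (hx : x ∈ Icc (-1 : ℝ) 1) :
    ∫ t in (-1 : ℝ)..1, (1 + (|t| + |x| - |t - x|) / 2) * (1 / (π * √(1 - t ^ 2)))
      = 1 + 1 / π + |x| / 2 - (x * arcsin x + √(1 - x ^ 2)) / π := by
  have hint {f : ℝ → ℝ} (hf : Continuous f) :=
    intervalIntegrable_mul_one_div_sqrt_one_sub_sq hf (a := -1) (b := 1) (by simp) (by simp)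
  have hsplit (t : ℝ) : (1 + (|t| + |x| - |t - x|) / 2) * (1 / (π * √(1 - t ^ 2)))
      = (1 / π) * (1 + |x| / 2) * (1 / √(1 - t ^ 2))
        + 1 / (2 * π) * (|t| * (1 / √(1 - t ^ 2)))
        - 1 / (2 * π) * (|t - x| * (1 / √(1 - t ^ 2))) := by
    simp only [one_div, mul_inv]
    ring
  simp only [hsplit]
  rw [intervalIntegral.integral_sub, intervalIntegral.integral_add,
    intervalIntegral.integral_const_mul, intervalIntegral.integral_const_mul,
    intervalIntegral.integral_const_mul, integral_one_div_sqrt_one_sub_sq,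
    integral_abs_mul_one_div_sqrt_one_sub_sq, integral_abs_sub_mul_one_div_sqrt_one_sub_sq hx]
  · field_simp
    ring
  · exact intervalIntegrable_one_div_sqrt_one_sub_sq.const_mul _
  · exact (hint continuous_abs).const_mul _
  · exact (intervalIntegrable_one_div_sqrt_one_sub_sq.const_mul _).add
      ((hint continuous_abs).const_mul _)
  · exact (hint (by fun_prop)).const_mul _

/-- double integral of the kernel `K₁(x,t) = 1 + (|t|+|x|-|t-x|)/2`
against the arcsine distribution on `[-1,1]` in both variables. -/
theorem kernel_double_integral_arcsine_one_dim :
    (∫ x in (-1 : ℝ)..1, ∫ t in (-1 : ℝ)..1,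
        (1 + (|t| + |x| - |t - x|) / 2) * (1 / (π * Real.sqrt (1 - t ^ 2)))
          * (1 / (π * Real.sqrt (1 - x ^ 2))))
      = 1 + 2 / π - 4 / π ^ 2 := by
  have hint {f : ℝ → ℝ} (hf : Continuous f) :=
    intervalIntegrable_mul_one_div_sqrt_one_sub_sq hf (a := -1) (b := 1) (by simp) (by simp)
  have hinner : ∀ x ∈ uIcc (-1 : ℝ) 1,
      ∫ t in (-1 : ℝ)..1, (1 + (|t| + |x| - |t - x|) / 2) * (1 / (π * √(1 - t ^ 2)))
          * (1 / (π * √(1 - x ^ 2)))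
        = (1 / π) * (1 + 1 / π) * (1 / √(1 - x ^ 2))
          + 1 / (2 * π) * (|x| * (1 / √(1 - x ^ 2)))
          - 1 / π ^ 2 * ((x * arcsin x + √(1 - x ^ 2)) * (1 / √(1 - x ^ 2))) := by
    intro x hx
    rw [uIcc_of_le (by norm_num)] at hx
    rw [intervalIntegral.integral_mul_const, integral_kernel_mul_arcsine_density hx]
    simp only [one_div, mul_inv]
    ring
  rw [intervalIntegral.integral_congr hinner,
    intervalIntegral.integral_sub, intervalIntegral.integral_add,
    intervalIntegral.integral_const_mul, intervalIntegral.integral_const_mul,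
    intervalIntegral.integral_const_mul, integral_one_div_sqrt_one_sub_sq,
    integral_abs_mul_one_div_sqrt_one_sub_sq,
    integral_mul_arcsin_add_sqrt_mul_one_div_sqrt_one_sub_sq]
  · field_simp
    ring
  · exact intervalIntegrable_one_div_sqrt_one_sub_sq.const_mul _
  · exact (hint continuous_abs).const_mul _
  · exact (intervalIntegrable_one_div_sqrt_one_sub_sq.const_mul _).add
      ((hint continuous_abs).const_mul _)
  · exact (hint (by fun_prop)).const_mul _
end
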